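/- Separation theorem, converse part under the channel semi-strong converse property (Theorem 6.7, part 2, channel version, spectral form). Let V = {Vⁿ} be a general source and W = {Wⁿ} a general channel with the property that for every channel input X = {Xⁿ} and every strictly increasing sequence of positive integers n₁ < n₂ < … it holds that p-liminf_{i→∞} (1/n_i) log( W^{n_i}(Y^{n_i}|X^{n_i})/P_{Y^{n_i}}(Y^{n_i}) ) ≤ sup_X I_(X;Y). If V is transmissible over W, then H̄(V) ≤ sup_X I_(X;Y). -/

import Mathlib

open Filter Real Topology

namespace ISC

/-- Words of length `n` over alphabet `A`. -/
abbrev Word (A : Type*) (n : ℕ) : Type _ := Fin n → A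

/-- `p` is a probability mass function. -/
def IsPMF {α : Type*} (p : α → ℝ) : Prop :=
  (∀ a, 0 ≤ p a) ∧ HasSum p 1

/-- Probability of the event `S` under the pmf `p`. -/
noncomputable def prob {α : Type*} (p : α → ℝ) (S : Set α) : ℝ :=
  ∑' a, S.indicator p a

/-- Output marginal `P_{Yⁿ}` of the channel `W` fed with the joint input law `P_{VⁿXⁿ}`. -/
noncomputable def outDist {𝒱 𝒳 𝒴 : Type*} {n : ℕ}
    (PVX : Word 𝒱 n × Word 𝒳 n → ℝ) (W : Word 𝒳 n → Word 𝒴 n → ℝ)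
    (y : Word 𝒴 n) : ℝ :=
  ∑' vx : Word 𝒱 n × Word 𝒳 n, PVX vx * W vx.2 y

/-- Joint law of `(Vⁿ, Xⁿ, Yⁿ)`: `P_{VⁿXⁿ}(v,x) · Wⁿ(y|x)`. -/
noncomputable def jointLaw {𝒱 𝒳 𝒴 : Type*} {n : ℕ}
    (PVX : Word 𝒱 n × Word 𝒳 n → ℝ) (W : Word 𝒳 n → Word 𝒴 n → ℝ) :
    Word 𝒱 n × Word 𝒳 n × Word 𝒴 n → ℝ :=
  fun z => PVX (z.1, z.2.1) * W z.2.1 z.2.2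

/-- The joint input law `P_{VⁿXⁿ}` induced by the deterministic encoder `φ`:
`P_{Vⁿ}(v) 1{x = φ(v)}`. -/
noncomputable def codeInput {𝒱 𝒳 : Type*} [DecidableEq 𝒳] {n : ℕ} (PV : Word 𝒱 n → ℝ)
    (φ : Word 𝒱 n → Word 𝒳 n) : Word 𝒱 n × Word 𝒳 n → ℝ :=
  fun vx => if vx.2 = φ vx.1 then PV vx.1 else 0

/-- Error probability `εₙ` of the joint source-channel code `(φ, ψ)`. -/
noncomputable def errProb {𝒱 𝒳 𝒴 : Type*} {n : ℕ}
    (PV : Word 𝒱 n → ℝ) (W : Word 𝒳 n → Word 𝒴 n → ℝ)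
    (φ : Word 𝒱 n → Word 𝒳 n) (ψ : Word 𝒴 n → Word 𝒱 n) : ℝ :=
  ∑' v, PV v * prob (W (φ v)) {y | ψ y ≠ v}

/-- `V` is transmissible over `W`. -/
def Transmissible {𝒱 𝒳 𝒴 : Type*} (PV : (n : ℕ) → Word 𝒱 n → ℝ)
    (W : (n : ℕ) → Word 𝒳 n → Word 𝒴 n → ℝ) : Prop :=
  ∃ (φ : (n : ℕ) → Word 𝒱 n → Word 𝒳 n) (ψ : (n : ℕ) → Word 𝒴 n → Word 𝒱 n),
    Tendsto (fun n => errProb (PV n) (W n) (φ n) (ψ n)) atTop (nhds 0)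

/-- Output marginal of the channel `W` for an input distribution `P_{Xⁿ}`. -/
noncomputable def outDistX {𝒳 𝒴 : Type*} {n : ℕ}
    (PX : Word 𝒳 n → ℝ) (W : Word 𝒳 n → Word 𝒴 n → ℝ) (y : Word 𝒴 n) : ℝ :=
  ∑' x : Word 𝒳 n, PX x * W x y

/-- Joint law of `(Xⁿ, Yⁿ)`: `P_{Xⁿ}(x) · Wⁿ(y|x)`. -/
noncomputable def jointXY {𝒳 𝒴 : Type*} {n : ℕ}
    (PX : Word 𝒳 n → ℝ) (W : Word 𝒳 n → Word 𝒴 n → ℝ) :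
    Word 𝒳 n × Word 𝒴 n → ℝ :=
  fun z => PX z.1 * W z.1 z.2

/-- Limit superior in probability of a sequence of random variables `Z i`
distributed according to the pmfs `p i`. -/
noncomputable def plimsup {α : ℕ → Type*} (p : (i : ℕ) → α i → ℝ)
    (Z : (i : ℕ) → α i → ℝ) : EReal :=
  sInf {β : EReal |
    Tendsto (fun i => prob (p i) {a | β < (Z i a : EReal)}) atTop (nhds 0)}

/-- Limit inferior in probability of a sequence of random variables `Z i`
distributed according to the pmfs `p i`. -/
noncomputable def pliminf {α : ℕ → Type*} (p : (i : ℕ) → α i → ℝ)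
    (Z : (i : ℕ) → α i → ℝ) : EReal :=
  sSup {β : EReal |
    Tendsto (fun i => prob (p i) {a | (Z i a : EReal) < β}) atTop (nhds 0)}

/-- Spectral sup-entropy rate `H̄(V)`. -/
noncomputable def Hbar {𝒱 : Type*} (PV : (n : ℕ) → Word 𝒱 n → ℝ) : EReal :=
  plimsup (fun n => PV n) (fun n v => (1 / (n : ℝ)) * Real.log (1 / PV n v))

/-- Spectral inf-entropy rate `H_(V)`. -/
noncomputable def Hlow {𝒱 : Type*} (PV : (n : ℕ) → Word 𝒱 n → ℝ) : EReal :=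
  pliminf (fun n => PV n) (fun n v => (1 / (n : ℝ)) * Real.log (1 / PV n v))

/-- Spectral inf-information rate `I_(X;Y)` of the channel `W` with input `X`. -/
noncomputable def Ilow {𝒳 𝒴 : Type*} (PX : (n : ℕ) → Word 𝒳 n → ℝ)
    (W : (n : ℕ) → Word 𝒳 n → Word 𝒴 n → ℝ) : EReal :=
  pliminf (fun n => jointXY (PX n) (W n))
    (fun n z => (1 / (n : ℝ)) * Real.log (W n z.1 z.2 / outDistX (PX n) (W n) z.2))

/-- Spectral sup-information rate `Ī(X;Y)` of the channel `W` with input `X`. -/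
noncomputable def Ihigh {𝒳 𝒴 : Type*} (PX : (n : ℕ) → Word 𝒳 n → ℝ)
    (W : (n : ℕ) → Word 𝒳 n → Word 𝒴 n → ℝ) : EReal :=
  plimsup (fun n => jointXY (PX n) (W n))
    (fun n z => (1 / (n : ℝ)) * Real.log (W n z.1 z.2 / outDistX (PX n) (W n) z.2))

/-- `sup_X I_(X;Y)`: the supremum over all channel inputs. -/
noncomputable def supIlow {𝒳 𝒴 : Type*}
    (W : (n : ℕ) → Word 𝒳 n → Word 𝒴 n → ℝ) : EReal :=
  ⨆ PX : {PX : (n : ℕ) → Word 𝒳 n → ℝ // ∀ n, IsPMF (PX n)}, Ilow PX.1 W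


open scoped ENNReal in
theorem ofReal_prob {α : Type*} {p : α → ℝ} (hp : IsPMF p) (S : Set α) :
    ENNReal.ofReal (prob p S) = ∑' a, S.indicator (fun a => ENNReal.ofReal (p a)) a := by
  unfold prob
  rw [ENNReal.ofReal_tsum_of_nonneg (fun a => Set.indicator_nonneg (fun a _ => hp.1 a) a)
    (hp.2.summable.indicator S)]
  refine tsum_congr fun a => ?_
  by_cases h : a ∈ S <;> simp [h]

theorem isPMF_iff {α : Type*} {p : α → ℝ} (h0 : ∀ a, 0 ≤ p a) :
    IsPMF p ↔ ∑' a, ENNReal.ofReal (p a) = 1 := by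
  constructor
  · intro h
    rw [← ENNReal.ofReal_tsum_of_nonneg h0 h.2.summable, h.2.tsum_eq, ENNReal.ofReal_one]
  · intro h
    refine ⟨h0, ?_⟩
    have h2 := ENNReal.hasSum_toReal (f := fun a => ENNReal.ofReal (p a)) (by rw [h]; simp)
    rw [← ENNReal.tsum_toReal_eq (fun a => ENNReal.ofReal_ne_top), h] at h2
    simpa [ENNReal.toReal_ofReal (h0 _)] using h2

theorem prob_nonneg' {α : Type*} {p : α → ℝ} (hp : ∀ a, 0 ≤ p a) (S : Set α) : 0 ≤ prob p S :=
  tsum_nonneg fun a => Set.indicator_nonneg (fun a _ => hp a) a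

theorem prob_le_one' {α : Type*} {p : α → ℝ} (hp : IsPMF p) (S : Set α) : prob p S ≤ 1 := by
  rw [← hp.2.tsum_eq]
  exact (hp.2.summable.indicator S).tsum_le_tsum
    (fun a => Set.indicator_le_self' (fun a _ => hp.1 a) a) hp.2.summable

open Classical in
/-- Push-forward. -/
noncomputable def push {α β : Type*} (φ : α → β) (q : α → ℝ) (x : β) : ℝ :=
  ∑' v, if φ v = x then q v else 0

open Classical in
theorem ofReal_push {α β : Type*} (φ : α → β) {q : α → ℝ} (hq : IsPMF q) (x : β) :
    ENNReal.ofReal (push φ q x) = ∑' v, if φ v = x then ENNReal.ofReal (q v) else 0 := by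
  unfold push
  rw [ENNReal.ofReal_tsum_of_nonneg]
  · refine tsum_congr fun a => ?_
    split_ifs <;> simp
  · intro v
    split_ifs
    · exact hq.1 v
    · exact le_rfl
  · refine Summable.of_nonneg_of_le (fun v => ?_) (fun v => ?_) hq.2.summable
    · split_ifs
      · exact hq.1 v
      · exact le_rfl
    · split_ifs
      · exact le_rfl
      · exact hq.1 v

theorem push_nonneg {α β : Type*} (φ : α → β) {q : α → ℝ} (hq : IsPMF q) (x : β) :
    0 ≤ push φ q x := by
  refine tsum_nonneg fun v => ?_
  split_ifs
  · exact hq.1 v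
  · exact le_rfl

theorem tsum_push {α β : Type*} (φ : α → β) {q : α → ℝ} (hq : IsPMF q) (f : β → ENNReal) :
    ∑' x, ENNReal.ofReal (push φ q x) * f x = ∑' v, ENNReal.ofReal (q v) * f (φ v) := by
  classical
  simp_rw [ofReal_push φ hq, ← ENNReal.tsum_mul_right]
  rw [ENNReal.tsum_comm]
  refine tsum_congr fun v => ?_
  rw [tsum_eq_single (φ v)]
  · simp
  · intro b hb
    simp [hb.symm]

theorem push_isPMF {α β : Type*} (φ : α → β) {q : α → ℝ} (hq : IsPMF q) :
    IsPMF (push φ q) := by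
  rw [isPMF_iff (push_nonneg φ hq)]
  have := tsum_push φ hq (fun _ => 1)
  simp only [mul_one] at this
  rw [this, (isPMF_iff hq.1).1 hq]

theorem jointXY_isPMF {𝒳 𝒴 : Type*} {n : ℕ} {PX : Word 𝒳 n → ℝ} {W : Word 𝒳 n → Word 𝒴 n → ℝ}
    (hX : IsPMF PX) (hW : ∀ x, IsPMF (W x)) : IsPMF (jointXY PX W) := by
  rw [isPMF_iff (p := jointXY PX W) (fun z => mul_nonneg (hX.1 _) ((hW _).1 _)), ENNReal.tsum_prod']
  simp only [jointXY, ENNReal.ofReal_mul (hX.1 _), ENNReal.tsum_mul_left,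
    (isPMF_iff (hW _).1).1 (hW _), mul_one]
  exact (isPMF_iff hX.1).1 hX

theorem pmf_le_one {α : Type*} {p : α → ℝ} (hp : IsPMF p) (a : α) : p a ≤ 1 := by
  rw [← hp.2.tsum_eq]
  exact hp.2.summable.le_tsum a (fun b _ => hp.1 b)

theorem out_summable {𝒳 𝒴 : Type*} {n : ℕ} {PX : Word 𝒳 n → ℝ} {W : Word 𝒳 n → Word 𝒴 n → ℝ}
    (hX : IsPMF PX) (hW : ∀ x, IsPMF (W x)) (y : Word 𝒴 n) :
    Summable fun x => PX x * W x y :=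
  Summable.of_nonneg_of_le (fun x => mul_nonneg (hX.1 x) ((hW x).1 y))
    (fun x => mul_le_of_le_one_right (hX.1 x) (pmf_le_one (hW x) y)) hX.2.summable

theorem tsum_out {𝒳 𝒴 : Type*} {n : ℕ} {PX : Word 𝒳 n → ℝ} {W : Word 𝒳 n → Word 𝒴 n → ℝ}
    (hX : IsPMF PX) (hW : ∀ x, IsPMF (W x)) :
    ∑' y, ENNReal.ofReal (outDistX PX W y) = 1 := by
  have : ∀ y, ENNReal.ofReal (outDistX PX W y) = ∑' x, ENNReal.ofReal (PX x * W x y) := fun y =>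
    ENNReal.ofReal_tsum_of_nonneg (fun x => mul_nonneg (hX.1 x) ((hW x).1 y)) (out_summable hX hW y)
  simp_rw [this]
  rw [ENNReal.tsum_comm]
  simp only [ENNReal.ofReal_mul (hX.1 _), ENNReal.tsum_mul_left,
    (isPMF_iff (hW _).1).1 (hW _), mul_one]
  exact (isPMF_iff hX.1).1 hX

theorem ofReal_errProb {𝒱 𝒳 𝒴 : Type*} {n : ℕ}
    {PV : Word 𝒱 n → ℝ} {W : Word 𝒳 n → Word 𝒴 n → ℝ} (hP : IsPMF PV) (hW : ∀ x, IsPMF (W x))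
    (φ : Word 𝒱 n → Word 𝒳 n) (ψ : Word 𝒴 n → Word 𝒱 n) :
    ENNReal.ofReal (errProb PV W φ ψ) = ∑' v, ENNReal.ofReal (PV v) *
      ∑' y, {y | ψ y ≠ v}.indicator (fun y => ENNReal.ofReal (W (φ v) y)) y := by
  unfold errProb
  rw [ENNReal.ofReal_tsum_of_nonneg
    (fun v => mul_nonneg (hP.1 v) (prob_nonneg' (hW _).1 _))
    (Summable.of_nonneg_of_le (fun v => mul_nonneg (hP.1 v) (prob_nonneg' (hW _).1 _))
    (fun v => mul_le_of_le_one_right (hP.1 v) (prob_le_one' (hW _) _)) hP.2.summable)]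
  refine tsum_congr fun v => ?_
  rw [ENNReal.ofReal_mul (hP.1 v), ofReal_prob (hW _)]

theorem oneshot {𝒱 𝒳 𝒴 : Type*} {n : ℕ}
    {PV Q : Word 𝒱 n → ℝ} {W : Word 𝒳 n → Word 𝒴 n → ℝ} (hP : IsPMF PV) (hQ : IsPMF Q)
    (hW : ∀ x, IsPMF (W x))
    (φ : Word 𝒱 n → Word 𝒳 n) (ψ : Word 𝒴 n → Word 𝒱 n) (D K c : ℝ) (hD : 0 ≤ D) (hK : 0 ≤ K)
    (hc : 0 ≤ c) (hQD : ∀ v, Q v ≤ D * PV v) (hQK : ∀ v, Q v ≤ K)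
    (S : Set (Word 𝒳 n × Word 𝒴 n))
    (hS : ∀ z ∈ S, 0 < push φ Q z.1 → 0 < W z.1 z.2 →
      W z.1 z.2 ≤ c * outDistX (push φ Q) W z.2) :
    prob (jointXY (push φ Q) W) S ≤ D * errProb PV W φ ψ + K * c := by
  classical
  have hX := push_isPMF φ hQ
  have herr : 0 ≤ errProb PV W φ ψ :=
    tsum_nonneg fun v => mul_nonneg (hP.1 v) (prob_nonneg' (hW _).1 _)
  have hout : ∀ y, 0 ≤ outDistX (push φ Q) W y :=
    fun y => tsum_nonneg fun x => mul_nonneg (hX.1 x) ((hW x).1 y)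
  rw [← ENNReal.ofReal_le_ofReal_iff (by positivity), ofReal_prob (jointXY_isPMF hX hW),
    ENNReal.ofReal_add (by positivity) (by positivity), ENNReal.ofReal_mul hD,
    ofReal_errProb hP hW, ENNReal.ofReal_mul hK]
  have e1 : ∀ x y, S.indicator (fun a => ENNReal.ofReal (jointXY (push φ Q) W a)) (x, y)
      ≤ ENNReal.ofReal (push φ Q x) *
        (if (x, y) ∈ S ∧ W x y ≤ c * outDistX (push φ Q) W y
          then ENNReal.ofReal (W x y) else 0) := by
    intro x y
    by_cases h : (x, y) ∈ S
    · rw [Set.indicator_of_mem h]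
      by_cases h2 : W x y ≤ c * outDistX (push φ Q) W y
      · simp [h, h2, jointXY, ENNReal.ofReal_mul (hX.1 _)]
      · have : jointXY (push φ Q) W (x, y) = 0 := by
          by_contra hne
          have hne' : push φ Q x * W x y ≠ 0 := hne
          have := mul_ne_zero_iff.1 hne'
          exact h2 (hS (x, y) h (lt_of_le_of_ne (hX.1 _) this.1.symm)
            (lt_of_le_of_ne ((hW _).1 _) this.2.symm))
        simp [this]
    · simp [h]
  rw [ENNReal.tsum_prod']
  refine (ENNReal.tsum_le_tsum fun x => ENNReal.tsum_le_tsum fun y => e1 x y).trans ?_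
  simp_rw [ENNReal.tsum_mul_left]
  rw [tsum_push φ hQ (fun x => ∑' y, (if (x, y) ∈ S ∧ W x y ≤ c * outDistX (push φ Q) W y
          then ENNReal.ofReal (W x y) else 0))]
  have e2 : ∀ v y, (if (φ v, y) ∈ S ∧ W (φ v) y ≤ c * outDistX (push φ Q) W y
          then ENNReal.ofReal (W (φ v) y) else 0) ≤
      {y | ψ y ≠ v}.indicator (fun y => ENNReal.ofReal (W (φ v) y)) y +
        (if ψ y = v then ENNReal.ofReal (c * outDistX (push φ Q) W y) else 0) := by
    intro v y
    by_cases h : ψ y = v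
    · rw [if_pos h]
      by_cases h1 : (φ v, y) ∈ S ∧ W (φ v) y ≤ c * outDistX (push φ Q) W y
      · rw [if_pos h1]
        exact le_add_left (ENNReal.ofReal_le_ofReal h1.2)
      · rw [if_neg h1]
        exact zero_le
    · simp only [Set.indicator, Set.mem_ofPred_eq, ne_eq, h, not_false_eq_true, if_true, if_false,
        add_zero]
      split_ifs
      · exact le_rfl
      · exact zero_le
  calc _ ≤ ∑' v, (ENNReal.ofReal (Q v) *
          (∑' y, {y | ψ y ≠ v}.indicator (fun y => ENNReal.ofReal (W (φ v) y)) y) +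
          ENNReal.ofReal (Q v) *
          (∑' y, (if ψ y = v then ENNReal.ofReal (c * outDistX (push φ Q) W y) else 0))) := by
        refine ENNReal.tsum_le_tsum fun v => ?_
        rw [← mul_add, ← ENNReal.tsum_add]
        gcongr with y
        exact e2 v y
    _ ≤ ∑' v, (ENNReal.ofReal D * (ENNReal.ofReal (PV v) *
          (∑' y, {y | ψ y ≠ v}.indicator (fun y => ENNReal.ofReal (W (φ v) y)) y)) +
          ENNReal.ofReal K *
          (∑' y, (if ψ y = v then ENNReal.ofReal (c * outDistX (push φ Q) W y) else 0))) := by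
        refine ENNReal.tsum_le_tsum fun v => ?_
        rw [← mul_assoc, ← ENNReal.ofReal_mul hD]
        gcongr
        · exact hQD v
        · exact hQK v
    _ = _ := by
        rw [ENNReal.tsum_add, ENNReal.tsum_mul_left, ENNReal.tsum_mul_left]
        congr 2
        rw [ENNReal.tsum_comm]
        have : ∀ y, ∑' v, (if ψ y = v then ENNReal.ofReal (c * outDistX (push φ Q) W y) else 0)
            = ENNReal.ofReal c * ENNReal.ofReal (outDistX (push φ Q) W y) := by
          intro y
          rw [tsum_eq_single (ψ y) (by intro b hb; simp [hb.symm])]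
          simp [ENNReal.ofReal_mul hc]
        simp_rw [this]
        rw [ENNReal.tsum_mul_left, tsum_out hX hW, mul_one]

theorem cond_isPMF {α : Type*} {p : α → ℝ} (hp : IsPMF p) (S : Set α) (h : 0 < prob p S) :
    IsPMF (fun a => S.indicator p a / prob p S) := by
  refine ⟨fun a => div_nonneg (Set.indicator_nonneg (fun a _ => hp.1 a) a) h.le, ?_⟩
  have := (hp.2.summable.indicator S).hasSum.div_const (prob p S)
  rwa [show (∑' a, S.indicator p a) = prob p S from rfl, div_self h.ne'] at this


/-- **Separation theorem, converse part under the channel semi-strong converse property**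
(Theorem 6.7, part 2, channel version, spectral form). -/
theorem separation_converse_channel_semi_strong_converse
    {𝒱 𝒳 𝒴 : Type} [Countable 𝒱] [Countable 𝒳] [Countable 𝒴]
    (PV : (n : ℕ) → Word 𝒱 n → ℝ) (hPV : ∀ n, IsPMF (PV n))
    (W : (n : ℕ) → Word 𝒳 n → Word 𝒴 n → ℝ) (hW : ∀ n x, IsPMF (W n x))
    (hssc : ∀ PX : (n : ℕ) → Word 𝒳 n → ℝ, (∀ n, IsPMF (PX n)) →
      ∀ ns : ℕ → ℕ, StrictMono ns → 0 < ns 0 →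
        pliminf (fun i => jointXY (PX (ns i)) (W (ns i)))
          (fun i z => (1 / (ns i : ℝ)) *
            Real.log (W (ns i) z.1 z.2 / outDistX (PX (ns i)) (W (ns i)) z.2)) ≤
          supIlow W)
    (htrans : Transmissible PV W) :
    Hbar PV ≤ supIlow W := by
  obtain ⟨φ, ψ, herr⟩ := htrans
  by_contra hlt
  rw [not_le] at hlt
  obtain ⟨a, ha, ha'⟩ := EReal.lt_iff_exists_real_btwn.1 hlt
  obtain ⟨b, hab, hb⟩ := EReal.lt_iff_exists_real_btwn.1 ha'
  have hab' : a < b := EReal.coe_lt_coe_iff.1 hab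
  let S : (n : ℕ) → Set (Word 𝒱 n) := fun n =>
    {v | (b : EReal) < (((1 / (n : ℝ)) * Real.log (1 / PV n v) : ℝ) : EReal)}
  have hnt : ¬ Tendsto (fun n => prob (PV n) (S n)) atTop (nhds 0) := by
    intro h
    exact absurd (sInf_le (a := (b : EReal)) h) (not_le.2 hb)
  obtain ⟨δ, hδ, hfreq⟩ : ∃ δ > 0, ∃ᶠ n in atTop, δ ≤ prob (PV n) (S n) := by
    by_contra hcon
    push Not at hcon
    apply hnt
    rw [Metric.tendsto_nhds]
    intro ε hε
    filter_upwards [hcon ε hε] with n hn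
    rw [Real.dist_eq, sub_zero, abs_of_nonneg (prob_nonneg' (hPV n).1 _)]
    exact hn
  obtain ⟨ns, hns, hP⟩ := Filter.extraction_of_frequently_atTop
    (hfreq.and_eventually (eventually_gt_atTop 0))
  classical
  let Q : (n : ℕ) → Word 𝒱 n → ℝ := fun n =>
    if δ ≤ prob (PV n) (S n) then fun v => (S n).indicator (PV n) v / prob (PV n) (S n) else PV n
  have hQ : ∀ n, IsPMF (Q n) := by
    intro n
    by_cases h : δ ≤ prob (PV n) (S n)
    · simp only [Q, h, if_true]
      exact cond_isPMF (hPV n) _ (hδ.trans_le h)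
    · simp only [Q, h, if_false]
      exact hPV n
  have key := hssc (fun n => push (φ n) (Q n)) (fun n => push_isPMF _ (hQ n)) ns hns (hP 0).2
  refine absurd (le_trans (le_sSup (a := (a : EReal)) ?_) key) (not_le.2 ha)
  simp only [Set.mem_ofPred_eq]
  have hbound : ∀ i, prob (jointXY (push (φ (ns i)) (Q (ns i))) (W (ns i)))
      {z | (((1 / (ns i : ℝ)) * Real.log (W (ns i) z.1 z.2 /
        outDistX (push (φ (ns i)) (Q (ns i))) (W (ns i)) z.2) : ℝ) : EReal) < (a : EReal)} ≤
      δ⁻¹ * errProb (PV (ns i)) (W (ns i)) (φ (ns i)) (ψ (ns i)) +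
        (δ⁻¹ * Real.exp (-(ns i : ℝ) * b)) * Real.exp ((ns i : ℝ) * a) := by
    intro i
    obtain ⟨hδi, hpos⟩ := hP i
    generalize ns i = n at hδi hpos
    have hn : (0 : ℝ) < n := by exact_mod_cast hpos
    have hprob : 0 < prob (PV n) (S n) := hδ.trans_le hδi
    have hinv : (prob (PV n) (S n))⁻¹ ≤ δ⁻¹ := by gcongr
    have hQv : ∀ v, Q n v = (S n).indicator (PV n) v / prob (PV n) (S n) := by
      intro v; simp only [Q, hδi, if_true]
    refine oneshot (hPV n) (hQ n) (hW n) (φ n) (ψ n) _ _ _ (by positivity) (by positivity)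
      (by positivity) ?_ ?_ _ ?_
    · intro v
      rw [hQv, div_eq_inv_mul]
      exact mul_le_mul hinv (Set.indicator_le_self' (fun a _ => (hPV n).1 a) v)
        (Set.indicator_nonneg (fun a _ => (hPV n).1 a) v) (by positivity)
    · intro v
      rw [hQv, div_eq_inv_mul]
      refine mul_le_mul hinv ?_ (Set.indicator_nonneg (fun a _ => (hPV n).1 a) v) (by positivity)
      by_cases hv : v ∈ S n
      · rw [Set.indicator_of_mem hv]
        rcases ((hPV n).1 v).eq_or_lt with h0 | h0
        · rw [← h0]; positivity
        · have h1 : b < (1 / (n : ℝ)) * Real.log (1 / PV n v) := EReal.coe_lt_coe_iff.1 hv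
          rw [one_div, Real.log_div one_ne_zero h0.ne', Real.log_one, zero_sub,
            lt_inv_mul_iff₀ hn] at h1
          rw [← Real.log_le_iff_le_exp h0]
          linarith
      · rw [Set.indicator_of_notMem hv]; positivity
    · rintro ⟨x, y⟩ hz hx hw
      have h1 := EReal.coe_lt_coe_iff.1 hz
      have hX := push_isPMF (φ n) (hQ n)
      have hout : 0 < outDistX (push (φ n) (Q n)) (W n) y :=
        lt_of_lt_of_le (mul_pos hx hw) ((out_summable hX (hW n) y).le_tsum x
          (fun x' _ => mul_nonneg (hX.1 x') ((hW n x').1 y)))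
      simp only at h1 hw ⊢
      rw [one_div, inv_mul_lt_iff₀ hn, Real.log_lt_iff_lt_exp (div_pos hw hout),
        div_lt_iff₀ hout] at h1
      exact h1.le
  refine squeeze_zero (fun i => prob_nonneg'
    (jointXY_isPMF (push_isPMF _ (hQ _)) (hW _)).1 _) hbound ?_
  have hns' : Tendsto (fun i => (ns i : ℝ)) atTop atTop :=
    tendsto_natCast_atTop_atTop.comp hns.tendsto_atTop
  have t1 := (herr.comp hns.tendsto_atTop).const_mul δ⁻¹
  have t2 : Tendsto (fun i => (δ⁻¹ * Real.exp (-(ns i : ℝ) * b)) * Real.exp ((ns i : ℝ) * a))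
      atTop (nhds (δ⁻¹ * 0)) := by
    have : ∀ i, (δ⁻¹ * Real.exp (-(ns i : ℝ) * b)) * Real.exp ((ns i : ℝ) * a) =
        δ⁻¹ * Real.exp (-((ns i : ℝ) * (b - a))) := by
      intro i
      rw [mul_assoc, ← Real.exp_add]
      congr 2
      ring
    simp_rw [this]
    exact (Real.tendsto_exp_neg_atTop_nhds_zero.comp
      (hns'.atTop_mul_const (sub_pos.2 hab'))).const_mul _
  simpa using t1.add t2

end ISC
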